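/- Let R be a one-dimensional Cohen-Macaulay local ring with canonical module \omega. Suppose there is a non-split short exact sequence 0 \to F \to M \oplus G \to \omega \to 0 with F, G finitely generated free, where M is torsion-free and Ext^1_R(M, R) = 0. If M \otimes_R \omega is torsion-free, then M \otimes_R M is torsion-free. -/

import Mathlib

open CategoryTheory IsLocalRing

open scoped TensorProduct

lemma bridge {R : Type} [CommRing R] (X Y : ModuleCat.{0} R) (n : ℕ)
    (h : Subsingleton (((_root_.Ext R (ModuleCat.{0} R) (n+1)).obj
      (Opposite.op X)).obj Y)) : Subsingleton (Abelian.Ext X Y (n+1)) := by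
  let P := projectiveResolution X
  have h1 : Limits.IsZero ((P.complex.linearYonedaObj R Y).homology (n+1)) :=
    (ModuleCat.isZero_of_subsingleton _).of_iso (P.isoExt (R := R) (n+1) Y).symm
  rw [← HomologicalComplex.exactAt_iff_isZero_homology,
    HomologicalComplex.exactAt_iff' _ n (n+1) (n+2) (by simp) (by simp),
    ShortComplex.moduleCat_exact_iff] at h1
  suffices ∀ x : Abelian.Ext X Y (n+1), x = 0 from ⟨fun a b => by rw [this a, this b]⟩
  intro x
  obtain ⟨f, hf, rfl⟩ := P.extMk_surjective x (n+2) rfl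
  rw [P.extMk_eq_zero_iff f (n+2) rfl hf n rfl]
  obtain ⟨g, hg⟩ := h1 f hf
  exact ⟨g, hg⟩

/-- Every class in the Ext group is killed by a non zero-divisor. -/
def TorsExt {R : Type} [CommRing R] (N Y : ModuleCat.{0} R) (i : ℕ) : Prop :=
  ∀ e : Abelian.Ext N Y i, ∃ x ∈ nonZeroDivisors R, x • e = 0

lemma extend_of_ext {R : Type} [CommRing R] {A B X Y : Type}
    [AddCommGroup A] [AddCommGroup B] [AddCommGroup X] [AddCommGroup Y]
    [Module R A] [Module R B] [Module R X] [Module R Y]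
    (a : A →ₗ[R] B) (b : B →ₗ[R] X) (ha : Function.Injective a)
    (hb : Function.Surjective b) (hab : Function.Exact a b)
    (hT : TorsExt (ModuleCat.of R X) (ModuleCat.of R Y) 1) (f : A →ₗ[R] Y) :
    ∃ x ∈ nonZeroDivisors R, ∃ g : B →ₗ[R] Y, g ∘ₗ a = x • f := by
  let S : ShortComplex (ModuleCat.{0} R) :=
    ShortComplex.mk (ModuleCat.ofHom a) (ModuleCat.ofHom b) (by
      ext y; exact hab.apply_apply_eq_zero y)
  have hS : S.ShortExact := 
    { exact := (ShortComplex.ShortExact.moduleCat_exact_iff_function_exact S).2 hab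
      mono_f := (ModuleCat.mono_iff_injective _).2 ha
      epi_g := (ModuleCat.epi_iff_surjective _).2 hb }
  obtain ⟨x, hx, hx0⟩ := hT (hS.extClass.comp (Abelian.Ext.mk₀ (ModuleCat.ofHom f)) (add_zero 1))
  refine ⟨x, hx, ?_⟩
  obtain ⟨g, hg⟩ := Abelian.Ext.contravariant_sequence_exact₁ hS (ModuleCat.of R Y)
    (Abelian.Ext.mk₀ (x • ModuleCat.ofHom f)) (add_zero 1)
    (by rw [Abelian.Ext.mk₀_smul, Abelian.Ext.comp_smul]; exact hx0)
  obtain ⟨g, rfl⟩ := (Abelian.Ext.mk₀_bijective _ _).2 g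
  rw [Abelian.Ext.mk₀_comp_mk₀] at hg
  have := (Abelian.Ext.mk₀_bijective _ _).1 hg
  refine ⟨g.hom, ?_⟩
  exact congrArg ModuleCat.Hom.hom this

lemma extend_of_ext0 {R : Type} [CommRing R] {A B X Y : Type}
    [AddCommGroup A] [AddCommGroup B] [AddCommGroup X] [AddCommGroup Y]
    [Module R A] [Module R B] [Module R X] [Module R Y]
    (a : A →ₗ[R] B) (b : B →ₗ[R] X) (ha : Function.Injective a)
    (hb : Function.Surjective b) (hab : Function.Exact a b)
    (hT : Subsingleton (Abelian.Ext (ModuleCat.of R X) (ModuleCat.of R Y) 1)) (f : A →ₗ[R] Y) :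
    ∃ g : B →ₗ[R] Y, g ∘ₗ a = f := by
  let S : ShortComplex (ModuleCat.{0} R) :=
    ShortComplex.mk (ModuleCat.ofHom a) (ModuleCat.ofHom b) (by
      ext y; exact hab.apply_apply_eq_zero y)
  have hS : S.ShortExact := 
    { exact := (ShortComplex.ShortExact.moduleCat_exact_iff_function_exact S).2 hab
      mono_f := (ModuleCat.mono_iff_injective _).2 ha
      epi_g := (ModuleCat.epi_iff_surjective _).2 hb }
  obtain ⟨g, hg⟩ := Abelian.Ext.contravariant_sequence_exact₁ hS (ModuleCat.of R Y)
    (Abelian.Ext.mk₀ (ModuleCat.ofHom f)) (add_zero 1)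
    (hT.elim _ _)
  obtain ⟨g, rfl⟩ := (Abelian.Ext.mk₀_bijective _ _).2 g
  rw [Abelian.Ext.mk₀_comp_mk₀] at hg
  have := (Abelian.Ext.mk₀_bijective _ _).1 hg
  refine ⟨g.hom, ?_⟩
  exact congrArg ModuleCat.Hom.hom this

lemma torsExt_mid {R : Type} [CommRing R] {A B X : Type} (Y : ModuleCat.{0} R)
    [AddCommGroup A] [AddCommGroup B] [AddCommGroup X]
    [Module R A] [Module R B] [Module R X] 
    (a : A →ₗ[R] B) (b : B →ₗ[R] X) (ha : Function.Injective a)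
    (hb : Function.Surjective b) (hab : Function.Exact a b) (i : ℕ)
    (hA : TorsExt (ModuleCat.of R A) Y i) (hX : TorsExt (ModuleCat.of R X) Y i) :
    TorsExt (ModuleCat.of R B) Y i := by
  let S : ShortComplex (ModuleCat.{0} R) :=
    ShortComplex.mk (ModuleCat.ofHom a) (ModuleCat.ofHom b) (by
      ext y; exact hab.apply_apply_eq_zero y)
  have hS : S.ShortExact := 
    { exact := (ShortComplex.ShortExact.moduleCat_exact_iff_function_exact S).2 hab
      mono_f := (ModuleCat.mono_iff_injective _).2 ha
      epi_g := (ModuleCat.epi_iff_surjective _).2 hb }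
  intro e
  obtain ⟨x, hx, hx0⟩ := hA ((Abelian.Ext.mk₀ S.f).comp e (zero_add i))
  obtain ⟨g, hg⟩ := Abelian.Ext.contravariant_sequence_exact₂ hS Y (x • e) (by
    rw [Abelian.Ext.comp_smul]; exact hx0)
  obtain ⟨y, hy, hy0⟩ := hX g
  refine ⟨y * x, mul_mem hy hx, ?_⟩
  rw [mul_smul]
  refine (congrArg (y • ·) hg.symm).trans ?_

  rw [← Abelian.Ext.comp_smul]
  refine (congrArg (fun z => (Abelian.Ext.mk₀ S.g).comp z (zero_add i)) hy0).trans ?_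
  simp

lemma torsExt_left {R : Type} [CommRing R] {A B X : Type} (Y : ModuleCat.{0} R)
    [AddCommGroup A] [AddCommGroup B] [AddCommGroup X]
    [Module R A] [Module R B] [Module R X] 
    (a : A →ₗ[R] B) (b : B →ₗ[R] X) (ha : Function.Injective a)
    (hb : Function.Surjective b) (hab : Function.Exact a b) (i : ℕ)
    (hB : Subsingleton (Abelian.Ext (ModuleCat.of R B) Y i))
    (hX : TorsExt (ModuleCat.of R X) Y (1 + i)) :
    TorsExt (ModuleCat.of R A) Y i := by
  let S : ShortComplex (ModuleCat.{0} R) :=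
    ShortComplex.mk (ModuleCat.ofHom a) (ModuleCat.ofHom b) (by
      ext y; exact hab.apply_apply_eq_zero y)
  have hS : S.ShortExact := 
    { exact := (ShortComplex.ShortExact.moduleCat_exact_iff_function_exact S).2 hab
      mono_f := (ModuleCat.mono_iff_injective _).2 ha
      epi_g := (ModuleCat.epi_iff_surjective _).2 hb }
  intro e
  obtain ⟨x, hx, hx0⟩ := hX (hS.extClass.comp e rfl)
  obtain ⟨g, hg⟩ := Abelian.Ext.contravariant_sequence_exact₁ hS Y (x • e) rfl (by
    rw [Abelian.Ext.comp_smul]; exact hx0)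
  refine ⟨x, hx, hg.symm.trans ?_⟩
  rw [hB.elim g 0]; simp

lemma torsExt_ann {R : Type} [CommRing R] (N Y : ModuleCat.{0} R) (x : R)
    (hx : x ∈ nonZeroDivisors R) (h : ∀ n : N, x • n = 0) (i : ℕ) : TorsExt N Y i := by
  intro e
  refine ⟨x, hx, ?_⟩
  have h0 : x • 𝟙 N = 0 := by ext n; exact h n
  calc x • e = x • (Abelian.Ext.mk₀ (𝟙 N)).comp e (zero_add i) := by simp
    _ = (Abelian.Ext.mk₀ (x • 𝟙 N)).comp e (zero_add i) := by
      rw [Abelian.Ext.mk₀_smul, Abelian.Ext.smul_comp]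
    _ = 0 := by rw [h0]; simp

lemma min_of_prime {R : Type} [CommRing R] [IsLocalRing R]
    (hdim : ringKrullDim R = 1) (hCM : ∃ x ∈ maximalIdeal R, x ∈ nonZeroDivisors R)
    (p : Ideal R) [hp : p.IsPrime] (h : ∀ x ∈ nonZeroDivisors R, x ∉ p) :
    p ∈ minimalPrimes R := by
  have : Ring.KrullDimLE 1 R := by
    rw [Ring.krullDimLE_iff, hdim]; norm_num
  rcases Ring.krullDimLE_one_iff.1 this p hp with h' | h'
  · exact h'
  · obtain ⟨x, hx, hx'⟩ := hCM
    rw [IsLocalRing.eq_maximalIdeal h'] at h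
    exact absurd hx (h x hx')

lemma ass_of_min {R : Type} [CommRing R] [IsNoetherianRing R] (W : Type) [AddCommGroup W]
    [Module R W] [Module.Finite R W] (hW : Module.annihilator R W = ⊥) (p : Ideal R)
    (hp : p ∈ minimalPrimes R) : p.IsPrime ∧ ∃ f : R ⧸ p →ₗ[R] W, Function.Injective f := by
  rw [← isAssociatedPrime_iff_exists_injective_linearMap]
  apply Module.associatedPrimes.minimalPrimes_annihilator_subset_associatedPrimes R W
  rw [hW]; exact hp

lemma torsExt_all {R : Type} [CommRing R] [IsNoetherianRing R] [IsLocalRing R]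
    (hdim : ringKrullDim R = 1) (hCM : ∃ x ∈ maximalIdeal R, x ∈ nonZeroDivisors R)
    (Y : ModuleCat.{0} R) (n : ℕ)
    (hn : ∀ (M : ModuleCat.{0} R) (i : ℕ), n < i → Subsingleton (Abelian.Ext M Y i)) (j : ℕ) :
    ∀ i, n < (i + 1) + j → ∀ (N : Type) [AddCommGroup N] [Module R N] (_ : Module.Finite R N),
      TorsExt (ModuleCat.of R N) Y (i + 1) := by
  induction j with
  | zero =>
    intro i hi N _ _ _ e
    exact ⟨1, one_mem _, (hn _ _ hi).elim _ _⟩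
  | succ j ih =>
    intro i hi N _ _ hN
    induction hN using IsNoetherianRing.induction_on_isQuotientEquivQuotientPrime R with
    | subsingleton N =>
      exact torsExt_ann _ _ 1 (one_mem _) (fun n => Subsingleton.elim (α := N) _ _) _
    | quotient N p e =>
      by_cases h : ∀ x ∈ nonZeroDivisors R, x ∉ p.1
      · have := p.2
        have hR : Module.annihilator R R = ⊥ := by
          rw [eq_bot_iff]; intro r hr
          simpa using Module.mem_annihilator.1 hr 1
        obtain ⟨-, f, hf⟩ := ass_of_min R hR p.1 (min_of_prime hdim hCM p.1 h)
        let f' : N →ₗ[R] R := f ∘ₗ e.toLinearMap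
        refine torsExt_left Y f' (LinearMap.range f').mkQ (hf.comp e.injective)
          (Submodule.mkQ_surjective _) (LinearMap.exact_map_mkQ_range f') (i + 1) ?_ ?_
        · have : Projective (ModuleCat.of R R) := inferInstance
          exact ⟨fun a b => by
            rw [Abelian.Ext.eq_zero_of_projective a, Abelian.Ext.eq_zero_of_projective b]⟩
        · rw [add_comm 1]
          exact ih (i + 1) (by omega) _ inferInstance
      · push Not at h
        obtain ⟨x, hx, hxp⟩ := h
        refine torsExt_ann _ _ x hx (fun n => ?_) _
        apply e.injective
        rw [map_zero]
        refine (map_smul e x n).trans ?_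
        obtain ⟨r, hr⟩ := Ideal.Quotient.mk_surjective (e n)
        rw [← hr, Algebra.smul_def, Ideal.Quotient.algebraMap_eq, Ideal.Quotient.eq_zero_iff_mem.2 hxp,
          zero_mul]
    | exact A B C f g hf hg hfg hA hC => exact torsExt_mid Y f g hf hg hfg _ hA hC

lemma tors_iff {R : Type} [CommRing R] {N : Type} [AddCommGroup N] [Module R N] :
    Submodule.torsion R N = ⊥ ↔ ∀ x ∈ nonZeroDivisors R, ∀ n : N, x • n = 0 → n = 0 := by
  rw [eq_bot_iff]
  constructor
  · intro h x hx n hn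
    exact h ((Submodule.mem_torsion_iff n).2 ⟨⟨x, hx⟩, hn⟩)
  · intro h n hn
    obtain ⟨⟨x, hx⟩, hn⟩ := (Submodule.mem_torsion_iff n).1 hn
    exact h x hx n hn

/-- A nonzero element of a torsion-free f.g. module has a multiple detected by a map to `W`. -/
lemma detect {R : Type} [CommRing R] [IsNoetherianRing R] [IsLocalRing R]
    (hdim : ringKrullDim R = 1) (hCM : ∃ x ∈ maximalIdeal R, x ∈ nonZeroDivisors R)
    (W : Type) [AddCommGroup W] [Module R W] [Module.Finite R W]
    (hW : Module.annihilator R W = ⊥)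
    (hT : ∀ (N : Type) [AddCommGroup N] [Module R N] (_ : Module.Finite R N),
      TorsExt (ModuleCat.of R N) (ModuleCat.of R W) 1)
    (L : Type) [AddCommGroup L] [Module R L] [Module.Finite R L]
    (hL : Submodule.torsion R L = ⊥) (K : Submodule R L) (hK : K ≠ ⊥) :
    ∃ (k : L) (_ : k ∈ K) (f : L →ₗ[R] W), f k ≠ 0 := by
  rw [tors_iff] at hL
  have : Nontrivial K := (Submodule.nontrivial_iff_ne_bot).2 hK
  obtain ⟨p, hp⟩ := associatedPrimes.nonempty R K
  obtain ⟨hp, f, hf⟩ := (isAssociatedPrime_iff_exists_injective_linearMap _ _).1 hp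
  have hreg : ∀ x ∈ nonZeroDivisors R, x ∉ p := by
    intro x hx hxp
    have h1 : x • (f 1 : L) = 0 := by
      rw [← Submodule.coe_smul, ← map_smul, Algebra.smul_def, Ideal.Quotient.algebraMap_eq,
        Ideal.Quotient.eq_zero_iff_mem.2 hxp]
      simp
    have h2 : f 1 = 0 := Subtype.ext (hL x hx _ h1)
    rw [← map_zero f] at h2
    exact one_ne_zero (hf h2)
  obtain ⟨-, g, hg⟩ := ass_of_min W hW p (min_of_prime hdim hCM p hreg)
  let f' := K.subtype ∘ₗ f
  obtain ⟨x, hx, u, hu⟩ := extend_of_ext f' (LinearMap.range f').mkQ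
    (K.subtype_injective.comp hf) (Submodule.mkQ_surjective _)
    (LinearMap.exact_map_mkQ_range f') (hT _ inferInstance) g
  refine ⟨f 1, (f 1).2, u, fun h0 => hreg x hx ?_⟩
  have h1 : g (x • 1) = 0 := by
    rw [map_smul]
    exact (LinearMap.congr_fun hu 1).symm.trans h0
  rw [← map_zero g] at h1
  have := hg h1
  rw [Algebra.smul_def, mul_one, Ideal.Quotient.algebraMap_eq, Ideal.Quotient.eq_zero_iff_mem] at this
  exact this

lemma extendHom {R : Type} [CommRing R] 
    (ω : Type) [AddCommGroup ω] [Module R ω] (hbij : Function.Bijective (LinearMap.lsmul R ω))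
    (hωω : Subsingleton (Abelian.Ext (ModuleCat.of R ω) (ModuleCat.of R ω) 1))
    (M : Type) [AddCommGroup M] [Module R M] [Module.Finite R M]
    (hM : Subsingleton (Abelian.Ext (ModuleCat.of R M) (ModuleCat.of R R) 1))
    (A B : Type) [AddCommGroup A] [Module R A] [AddCommGroup B] [Module R B]
    (a : A →ₗ[R] B) (b : B →ₗ[R] ω)
    (ha : Function.Injective a) (hb : Function.Surjective b)
    (hab : Function.Exact a b) (g : A →ₗ[R] M →ₗ[R] ω) :
    ∃ h : B →ₗ[R] M →ₗ[R] ω, h ∘ₗ a = g := by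
  obtain ⟨n, π, hπ⟩ := Module.Finite.exists_fin' R M
  have hs : ∀ i : Fin n, ∃ u : B →ₗ[R] ω, ∀ y, u (a y) = g y (π (Pi.single i 1)) := by
    intro i
    obtain ⟨u, hu⟩ := extend_of_ext0 a b ha hb hab hωω
      ((LinearMap.applyₗ (π (Pi.single i 1))) ∘ₗ g)
    exact ⟨u, fun y => LinearMap.congr_fun hu y⟩
  choose u hu using hs
  let U : B →ₗ[R] (Fin n → R) →ₗ[R] ω :=
    ∑ i, ((LinearMap.lsmul R ω).flip.comp (u i)).compl₂ (LinearMap.proj i)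
  have hU : ∀ y p, U (a y) p = g y (π p) := by
    intro y p
    have hp : p = ∑ i, p i • (Pi.single i 1 : Fin n → R) := pi_eq_sum_univ' p |>.trans (by
      refine Finset.sum_congr rfl fun i _ => ?_
      congr 1)
    conv_rhs => rw [hp]
    simp [U, hu, LinearMap.sum_apply]
  let M1 := LinearMap.ker π
  -- the scalar
  have hv : ∀ m : M1, ∃ c : R, ∀ z, U z m = c • b z := by
    intro m
    have hker : LinearMap.ker b ≤ LinearMap.ker (U.flip (m : Fin n → R)) := by
      intro z hz
      obtain ⟨y, rfl⟩ := (hab z).1 hz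
      have : π (m : Fin n → R) = 0 := m.2
      simp [hU, this]
    obtain ⟨w, hw⟩ : ∃ w : ω →ₗ[R] ω, w ∘ₗ b = U.flip (m : Fin n → R) := by
      refine ⟨(LinearMap.ker b).liftQ _ hker ∘ₗ (b.quotKerEquivOfSurjective hb).symm.toLinearMap, ?_⟩
      ext z
      have : (b.quotKerEquivOfSurjective hb).symm (b z) = (LinearMap.ker b).mkQ z := by
        rw [LinearEquiv.symm_apply_eq]; rfl
      simp only [LinearMap.comp_apply, LinearEquiv.coe_coe, this]
      rfl
    obtain ⟨c, hc⟩ := hbij.2 w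
    refine ⟨c, fun z => ?_⟩
    have := LinearMap.congr_fun hw z
    rw [← hc] at this
    exact this.symm
  choose c hc using hv
  have hcinj : ∀ r s : R, (∀ w : ω, r • w = s • w) → r = s := fun r s h =>
    hbij.1 (LinearMap.ext h)
  let C : M1 →ₗ[R] R :=
    { toFun := c
      map_add' := fun x y => hcinj _ _ fun w => by
        obtain ⟨z, rfl⟩ := hb w
        rw [← hc, add_smul, ← hc, ← hc]; simp
      map_smul' := fun r x => hcinj _ _ fun w => by
        obtain ⟨z, rfl⟩ := hb w
        rw [← hc, smul_eq_mul, mul_smul, RingHom.id_apply, ← hc]; simp }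
  obtain ⟨C', hC'⟩ := extend_of_ext0 M1.subtype π M1.subtype_injective hπ
    (LinearMap.exact_subtype_ker_map π) hM C
  let V : B →ₗ[R] (Fin n → R) →ₗ[R] ω :=
    U - ((LinearMap.lsmul R ω).flip.comp b).compl₂ C'
  have hV : ∀ z, LinearMap.ker π ≤ LinearMap.ker (V z) := by
    intro z m hm
    have h1 := hc ⟨m, hm⟩ z
    have h2 : C' m = c ⟨m, hm⟩ := LinearMap.congr_fun hC' ⟨m, hm⟩
    simp only [LinearMap.mem_ker]
    simp [V, h2, ← h1]
  have hlift : ∀ z, ∃ w : M →ₗ[R] ω, w ∘ₗ π = V z := by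
    intro z
    refine ⟨(LinearMap.ker π).liftQ _ (hV z) ∘ₗ (π.quotKerEquivOfSurjective hπ).symm.toLinearMap, ?_⟩
    refine LinearMap.ext fun t => ?_
    have : (π.quotKerEquivOfSurjective hπ).symm (π t) = (LinearMap.ker π).mkQ t := by
      rw [LinearEquiv.symm_apply_eq]; rfl
    simp only [LinearMap.comp_apply, LinearEquiv.coe_coe, this]
    rfl
  choose w hw using hlift
  have hw' : ∀ z p, w z (π p) = V z p := fun z p => LinearMap.congr_fun (hw z) p
  refine ⟨{ toFun := w, map_add' := ?_, map_smul' := ?_ }, ?_⟩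
  · intro x y; ext m; obtain ⟨p, rfl⟩ := hπ m
    simp [hw']
  · intro r x; ext m; obtain ⟨p, rfl⟩ := hπ m
    simp [hw']
  · ext y m; obtain ⟨p, rfl⟩ := hπ m
    have : b (a y) = 0 := hab.apply_apply_eq_zero y
    simp [hw', V, hU, this]


open CategoryTheory IsLocalRing

open scoped TensorProduct

/-- A canonical (dualizing) module over a Noetherian local ring: a finitely generated
module of finite injective dimension such that the natural map `R → End_R(ω)` is
bijective and `Ext^i(ω, ω) = 0` for all `i ≥ 1`. -/
def IsCanonicalModule (R : Type) [CommRing R]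
    (ω : Type) [AddCommGroup ω] [Module R ω] : Prop :=
  Module.Finite R ω ∧
  (∃ n : ℕ, ∀ (M : ModuleCat.{0} R) (i : ℕ), n < i →
    Subsingleton (((_root_.Ext R (ModuleCat.{0} R) i).obj
      (Opposite.op M)).obj (ModuleCat.of R ω))) ∧
  Function.Bijective (LinearMap.lsmul R ω) ∧
  (∀ i : ℕ, 1 ≤ i →
    Subsingleton (((_root_.Ext R (ModuleCat.{0} R) i).obj
      (Opposite.op (ModuleCat.of R ω))).obj (ModuleCat.of R ω)))

/-- Let `R` be a one-dimensional Cohen-Macaulay local ring with canonical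
module `ω`. Suppose there is a non-split short exact sequence `0 → F → M ⊕ G → ω → 0`
with `F`, `G` finitely generated free, `M` torsion-free and `Ext¹_R(M,R) = 0`.
If `M ⊗_R ω` is torsion-free, then `M ⊗_R M` is torsion-free. -/
theorem stmt_16 (R : Type) [CommRing R] [IsNoetherianRing R] [IsLocalRing R]
    (hdim : ringKrullDim R = 1)
    -- Cohen-Macaulayness: the maximal ideal contains a non zero-divisor
    (hCM : ∃ x ∈ maximalIdeal R, x ∈ nonZeroDivisors R)
    (ω : Type) [AddCommGroup ω] [Module R ω] (hω : IsCanonicalModule R ω)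
    (M : Type) [AddCommGroup M] [Module R M] [Module.Finite R M]
    (F G : Type) [AddCommGroup F] [Module R F] [Module.Free R F] [Module.Finite R F]
    [AddCommGroup G] [Module R G] [Module.Free R G] [Module.Finite R G]
    (a : F →ₗ[R] (M × G)) (b : (M × G) →ₗ[R] ω)
    (ha : Function.Injective a) (hb : Function.Surjective b)
    (hab : Function.Exact a b)
    (hnonsplit : ¬ ∃ s : ω →ₗ[R] (M × G), b ∘ₗ s = LinearMap.id)
    (hMtf : Submodule.torsion R M = ⊥)
    (hExt : Subsingleton (((_root_.Ext R (ModuleCat.{0} R) 1).obj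
      (Opposite.op (ModuleCat.of R M))).obj (ModuleCat.of R R)))
    (htf : Submodule.torsion R (M ⊗[R] ω) = ⊥) :
    Submodule.torsion R (M ⊗[R] M) = ⊥ := by
  obtain ⟨hfin, ⟨n, hn⟩, hbij, hωω⟩ := hω
  have hωω1 := bridge _ _ 0 (hωω 1 le_rfl)
  have hM1 := bridge _ _ 0 hExt
  have hn' : ∀ (N : ModuleCat.{0} R) (i : ℕ), n < i →
      Subsingleton (Abelian.Ext N (ModuleCat.of R ω) i) := by
    intro N i hi
    obtain ⟨j, rfl⟩ : ∃ j, i = j + 1 := ⟨i - 1, by omega⟩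
    exact bridge _ _ j (hn N _ hi)
  have hT : ∀ (N : Type) [AddCommGroup N] [Module R N] (_ : Module.Finite R N),
      TorsExt (ModuleCat.of R N) (ModuleCat.of R ω) 1 := fun N _ _ h =>
    torsExt_all hdim hCM _ n hn' n 0 (by omega) N h
  have hann : Module.annihilator R ω = ⊥ := by
    rw [eq_bot_iff]
    intro r hr
    refine hbij.1 (LinearMap.ext fun w => ?_)
    simpa using Module.mem_annihilator.1 hr w
  -- torsion-freeness of `M ⊗ F`
  have hMF : Submodule.torsion R (M ⊗[R] F) = ⊥ := by
    rw [tors_iff] at hMtf ⊢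
    intro x hx t ht
    let e := TensorProduct.equivFinsuppOfBasisRight (M := M) (Module.Free.chooseBasis R F)
    apply e.injective
    rw [map_zero]
    ext i
    apply hMtf x hx
    rw [← Finsupp.smul_apply, ← map_smul, ht, map_zero]
    rfl
  have hinj : LinearMap.ker (a.lTensor M) = ⊥ := by
    by_contra hK
    obtain ⟨k, hk, f, hf⟩ := detect hdim hCM ω hann hT (M ⊗[R] F) hMF _ hK
    obtain ⟨h, hh⟩ := extendHom ω hbij hωω1 M hM1 F (M × G) a b ha hb hab
      (TensorProduct.curry f).flip
    apply hf
    have : f = TensorProduct.lift h.flip ∘ₗ a.lTensor M := by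
      refine TensorProduct.ext' fun m y => ?_
      have := LinearMap.congr_fun (LinearMap.congr_fun hh y) m
      simpa using this.symm
    rw [this, LinearMap.comp_apply, LinearMap.mem_ker.1 hk, map_zero]
  have hex := lTensor_exact M hab hb
  rw [tors_iff] at hMF htf ⊢
  intro x hx t ht
  have hz : (LinearMap.inl R M G).lTensor M t = 0 := by
    have h1 : b.lTensor M ((LinearMap.inl R M G).lTensor M t) = 0 :=
      htf x hx _ (by rw [← map_smul, ← map_smul, ht, map_zero, map_zero])
    obtain ⟨s, hs⟩ := (hex _).1 h1
    have : s = 0 := hMF x hx _ (LinearMap.ker_eq_bot.1 hinj (by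
      rw [map_smul, hs, ← map_smul, ht, map_zero, map_zero]))
    rw [← hs, this, map_zero]
  have h2 := congrArg ((LinearMap.fst R M G).lTensor M) hz
  rw [← LinearMap.comp_apply, ← LinearMap.lTensor_comp, LinearMap.fst_comp_inl] at h2
  simpa using h2
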